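/- Assume the Riemann Hypothesis is false. Then γ_r < e^{−γ} for infinitely many integers r. In particular, Γ := inf_{r ≥ 0} γ_r < e^{−γ}. -/

import Mathlib

open Filter

/-- Generalized Euler constant for a finite set of primes `P`:
`γ(P) = ∏_{p∈P}(1 - 1/p) * (γ + ∑_{p∈P} log p / (p-1))`. -/
noncomputable def gammaP (P : Finset ℕ) : ℝ :=
  (∏ p ∈ P, (1 - 1 / (p : ℝ))) *
    (Real.eulerMascheroniConstant + ∑ p ∈ P, Real.log p / ((p : ℝ) - 1))

/-- `γ_r = γ({p_1, …, p_r})`, the generalized Euler constant for the first `r` primes. -/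
noncomputable def gammaR (r : ℕ) : ℝ :=
  gammaP ((Finset.range r).image (Nat.nth Nat.Prime))

section Landau
open MeasureTheory ProbabilityTheory Topology

variable {Ω : Type*} [MeasurableSpace Ω] {μ : Measure Ω} {X : Ω → ℝ}

/-- Pringsheim's principle for exponential moments of a nonpositive variable. -/
lemma sub_mem_integrableExpSet (hXm : Measurable X) (hX : ∀ᵐ ω ∂μ, X ω ≤ 0)
    {H : ℂ → ℂ} {c r t : ℝ} (hc : c ∈ interior (integrableExpSet X μ))
    (hH : DifferentiableOn ℂ H (Metric.ball (c : ℂ) r))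
    (hcH : complexMGF X μ =ᶠ[𝓝 (c : ℂ)] H) (ht0 : 0 ≤ t) (htr : t < r) :
    c - t ∈ integrableExpSet X μ := by
  have hz : ((c : ℂ) - t) ∈ Metric.ball (c : ℂ) r := by
    simp [abs_of_nonneg ht0, htr]
  have hs := Complex.hasSum_taylorSeries_on_ball hH hz
  set f : ℕ → Ω → ℝ := fun n ω => (t * -X ω) ^ n / n.factorial * Real.exp (c * X ω) with hf
  have hfi : ∀ n, Integrable (f n) μ := by
    intro n
    have := (integrable_pow_mul_exp_of_mem_interior_integrableExpSet hc n).const_mul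
      ((-t) ^ n / n.factorial)
    refine this.congr (Eventually.of_forall fun ω => ?_)
    simp only [hf, mul_pow, neg_pow (X ω), neg_pow t]
    ring
  have hf0 : ∀ n, ∀ᵐ ω ∂μ, 0 ≤ f n ω := by
    intro n
    filter_upwards [hX] with ω hω
    have : 0 ≤ t * -X ω := mul_nonneg ht0 (by linarith)
    simp only [hf]; positivity
  have hterm : ∀ n : ℕ, ((n.factorial : ℂ)⁻¹ • ((c : ℂ) - t - c) ^ n • iteratedDeriv n H c)
      = ((∫ ω, f n ω ∂μ : ℝ) : ℂ) := by
    intro n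
    rw [← hcH.iteratedDeriv_eq n, iteratedDeriv_complexMGF (by simpa using hc), ← integral_complex_ofReal]
    simp only [smul_eq_mul]
    rw [← mul_assoc, ← integral_const_mul]
    congr 1
    ext ω
    simp only [hf]
    push_cast
    rw [show (c : ℂ) - t - c = -t by ring, mul_pow, neg_pow (X ω : ℂ), neg_pow (t : ℂ)]
    ring
  simp_rw [hterm] at hs
  have hsum : Summable fun n => ∫ ω, f n ω ∂μ := by
    have := hs.summable
    exact_mod_cast this
  have hlin : ∑' n, ∫⁻ ω, ENNReal.ofReal (f n ω) ∂μ ≠ ⊤ := by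
    simp_rw [← fun n => ofReal_integral_eq_lintegral_ofReal (hfi n) (hf0 n)]
    exact hsum.tsum_ofReal_ne_top
  rw [← lintegral_tsum (fun n => (hfi n).aemeasurable.ennreal_ofReal)] at hlin
  have hpt : ∀ᵐ ω ∂μ, ∑' n, ENNReal.ofReal (f n ω) = ENNReal.ofReal (Real.exp ((c - t) * X ω)) := by
    filter_upwards [ae_all_iff.2 hf0] with ω hω
    have h1 : HasSum (fun n => f n ω) (Real.exp (t * -X ω) * Real.exp (c * X ω)) := by
      refine HasSum.mul_right _ ?_
      rw [Real.exp_eq_exp_ℝ]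
      exact NormedSpace.expSeries_div_hasSum_exp (t * -X ω)
    rw [← ENNReal.ofReal_tsum_of_nonneg hω h1.summable, h1.tsum_eq, ← Real.exp_add]
    ring_nf
  rw [lintegral_congr_ae hpt] at hlin
  refine ⟨by fun_prop, ?_⟩
  rw [hasFiniteIntegral_iff_ofReal (Eventually.of_forall fun ω => (Real.exp_pos _).le)]
  exact hlin.lt_top

/-- Landau's theorem: the exponential moments of a nonpositive variable exist as far to the left
as their holomorphic continuation along the real axis does. -/
theorem integrableExpSet_of_continuation (hXm : Measurable X) (hX : ∀ᵐ ω ∂μ, X ω ≤ 0)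
    {a b : ℝ} {U : Set ℂ} {H : ℂ → ℂ} (hU : IsOpen U) (hbU : ∀ x : ℝ, b < x → (x : ℂ) ∈ U)
    (hH : DifferentiableOn ℂ H U) (ha : ∀ x, a < x → x ∈ integrableExpSet X μ)
    (heq : ∀ x : ℝ, a < x → complexMGF X μ x = H x) {x : ℝ} (hx : b < x) :
    x ∈ integrableExpSet X μ := by
  by_contra hxS
  set S := integrableExpSet X μ with hS
  have hconv : S.OrdConnected := (convex_integrableExpSet).ordConnected
  have hlb : ∀ y ∈ S, x < y := by
    intro y hy
    by_contra! hle
    refine hxS (hconv.out hy (ha (max a x + 1) ?_) ⟨hle, ?_⟩)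
    · linarith [le_max_left a x]
    · linarith [le_max_right a x]
  have hne : S.Nonempty := ⟨a + 1, ha _ (by linarith)⟩
  have hbdd : BddBelow S := ⟨x, fun y hy => (hlb y hy).le⟩
  set σ := sInf S with hσ
  have hxσ : x ≤ σ := le_csInf hne fun y hy => (hlb y hy).le
  have hσS : Set.Ioi σ ⊆ S := by
    intro y hy
    obtain ⟨z, hz, hzy⟩ := exists_lt_of_csInf_lt hne hy
    refine hconv.out hz (ha (max a y + 1) ?_) ⟨hzy.le, ?_⟩
    · linarith [le_max_left a y]
    · linarith [le_max_right a y]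
  have hint : ∀ y, σ < y → y ∈ interior S := fun y hy =>
    mem_interior.2 ⟨Set.Ioi σ, hσS, isOpen_Ioi, hy⟩
  obtain ⟨ε, hε, hball⟩ := Metric.isOpen_iff.1 hU (σ : ℂ) (hbU σ (by linarith))
  have hreal : ∀ y : ℝ, σ < y → complexMGF X μ y = H y := by
    have hF : AnalyticOnNhd ℝ (fun y : ℝ => complexMGF X μ y) (Set.Ioi σ) := by
      intro y hy
      have h1 : AnalyticAt ℂ (complexMGF X μ) (y : ℂ) :=
        analyticAt_complexMGF (by simpa using hint y hy)
      exact AnalyticAt.comp (f := fun y : ℝ => (y : ℂ)) (h1.restrictScalars (𝕜 := ℝ))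
        (Complex.ofRealCLM.analyticAt y)
    have hG : AnalyticOnNhd ℝ (fun y : ℝ => H y) (Set.Ioi σ) := by
      intro y hy
      have h1 : AnalyticAt ℂ H (y : ℂ) :=
        hH.analyticAt (hU.mem_nhds (hbU y (by simp only [Set.mem_Ioi] at hy; linarith)))
      exact AnalyticAt.comp (f := fun y : ℝ => (y : ℂ)) (h1.restrictScalars (𝕜 := ℝ))
        (Complex.ofRealCLM.analyticAt y)
    have hm : max a σ + 1 ∈ Set.Ioi σ := by
      simp only [Set.mem_Ioi]; linarith [le_max_right a σ]
    have := hF.eqOn_of_preconnected_of_eventuallyEq hG isPreconnected_Ioi hm ?_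
    · exact fun y hy => this hy
    · filter_upwards [Ioi_mem_nhds (show a < max a σ + 1 by linarith [le_max_left a σ])] with y hy
      exact heq y hy
  have hcσ : σ < σ + ε / 4 := by linarith
  have hmem := sub_mem_integrableExpSet (H := H) (c := σ + ε / 4) (r := ε / 2) (t := 3 * ε / 8)
    hXm hX (hint _ hcσ) ?_ ?_ (by positivity) (by linarith)
  · have := csInf_le hbdd hmem
    linarith
  · refine hH.mono (subset_trans ?_ hball)
    refine Metric.ball_subset_ball' ?_
    rw [Complex.dist_eq, ← Complex.ofReal_sub, Complex.norm_real, Real.norm_eq_abs,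
      show σ + ε / 4 - σ = ε / 4 by ring, abs_of_pos (by positivity)]
    linarith
  · have h1 : AnalyticAt ℂ (complexMGF X μ) ((σ + ε / 4 : ℝ) : ℂ) :=
      analyticAt_complexMGF (by simpa using hint _ hcσ)
    have h2 : AnalyticAt ℂ H ((σ + ε / 4 : ℝ) : ℂ) :=
      hH.analyticAt (hU.mem_nhds (hbU _ (by linarith)))
    refine (h1.frequently_eq_iff_eventually_eq h2).1 ?_
    have h3 : Tendsto (fun y : ℝ => (y : ℂ)) (𝓝[≠] (σ + ε / 4)) (𝓝[≠] ((σ + ε / 4 : ℝ) : ℂ)) :=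
      Complex.continuous_ofReal.continuousAt.continuousWithinAt.tendsto_nhdsWithin
        fun y hy h => hy (Complex.ofReal_injective h)
    refine h3.frequently (Eventually.frequently ?_)
    filter_upwards [nhdsWithin_le_nhds (Ioi_mem_nhds hcσ)] with y hy
    exact hreal y hy

end Landau

section Density
open MeasureTheory ProbabilityTheory Topology

variable {Ω : Type*} [MeasurableSpace Ω] {ν : Measure Ω} {X g : Ω → ℝ}

lemma mem_integrableExpSet_withDensity (hg : Measurable g) {x : ℝ} :
    x ∈ integrableExpSet X (ν.withDensity fun ω => ENNReal.ofReal (g ω)) ↔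
      Integrable (fun ω => max (g ω) 0 * Real.exp (x * X ω)) ν := by
  unfold integrableExpSet
  rw [Set.mem_ofPred_eq, integrable_withDensity_iff_integrable_smul' (by fun_prop)
    (Eventually.of_forall fun ω => ENNReal.ofReal_lt_top)]
  simp [ENNReal.toReal_ofReal']

lemma complexMGF_withDensity (hg : Measurable g) (z : ℂ) :
    complexMGF X (ν.withDensity fun ω => ENNReal.ofReal (g ω)) z =
      ∫ ω, ((max (g ω) 0 : ℝ) : ℂ) * Complex.exp (z * X ω) ∂ν := by
  unfold complexMGF
  rw [integral_withDensity_eq_integral_toReal_smul (by fun_prop)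
    (Eventually.of_forall fun ω => ENNReal.ofReal_lt_top)]
  simp [ENNReal.toReal_ofReal']

end Density

section Zeta
open MeasureTheory ProbabilityTheory Topology Set

/-- The fractional part measure `{t} / t dt` on `(1, ∞)`. -/
noncomputable def fractMeasure : Measure ℝ :=
  (volume.restrict (Ioi (1 : ℝ))).withDensity fun t => ENNReal.ofReal (Int.fract t / t)

lemma max_fract_div_mul_exp {s t : ℝ} (ht : 1 < t) :
    max (Int.fract t / t) 0 * Real.exp (s * -Real.log t) = Int.fract t * t ^ (-s - 1) := by
  have ht0 : 0 < t := by linarith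
  rw [max_eq_left (div_nonneg (Int.fract_nonneg t) ht0.le), Real.rpow_sub_one ht0.ne',
    Real.rpow_def_of_pos ht0]
  ring_nf

lemma integrable_fract_mul_rpow {s : ℝ} (hs : 0 < s) :
    IntegrableOn (fun t : ℝ => Int.fract t * t ^ (-s - 1)) (Ioi 1) := by
  refine Integrable.mono' (integrableOn_Ioi_rpow_of_lt (by linarith : -s - 1 < -1) one_pos)
    (by fun_prop) ?_
  filter_upwards [ae_restrict_mem measurableSet_Ioi] with t ht
  have ht0 : (0 : ℝ) < t := one_pos.trans ht
  rw [norm_mul, Real.norm_of_nonneg (Int.fract_nonneg t),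
    Real.norm_of_nonneg (Real.rpow_nonneg ht0.le _)]
  exact mul_le_of_le_one_left (Real.rpow_nonneg ht0.le _) (Int.fract_lt_one t).le

lemma mem_integrableExpSet_fractMeasure {s : ℝ} (hs : 0 < s) :
    s ∈ integrableExpSet (fun t => -Real.log t) fractMeasure := by
  rw [fractMeasure, mem_integrableExpSet_withDensity (by fun_prop)]
  refine (integrable_fract_mul_rpow hs).congr ?_
  filter_upwards [ae_restrict_mem measurableSet_Ioi] with t ht
  exact (max_fract_div_mul_exp ht).symm

lemma complexMGF_fractMeasure (s : ℝ) :
    complexMGF (fun t => -Real.log t) fractMeasure s =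
      ((∫ t in Ioi (1 : ℝ), Int.fract t * t ^ (-s - 1) : ℝ) : ℂ) := by
  rw [fractMeasure, complexMGF_withDensity (by fun_prop), ← integral_complex_ofReal]
  refine setIntegral_congr_fun measurableSet_Ioi fun t ht => ?_
  simp only [← max_fract_div_mul_exp ht]
  push_cast
  rfl

lemma riemannZeta₁_eq_of_one_lt {s : ℝ} (hs : 1 < s) :
    riemannZeta₁ s =
      s - s * (s - 1) * complexMGF (fun t => -Real.log t) fractMeasure s := by
  have hs1 : (s : ℂ) ≠ 1 := by exact_mod_cast hs.ne'
  have hsub : (s : ℂ) - 1 ≠ 0 := sub_ne_zero.2 hs1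
  have h1 : riemannZeta s = (s - 1 : ℂ)⁻¹ * riemannZeta₁ s := riemannZeta_eq_inv_sub_mul hs1
  have hL := LSeries_eq_mul_integral_of_nonneg (fun _ => 1) zero_le_one
    (s := (s : ℂ)) (by simpa using hs) ?_ (fun _ => zero_le_one)
  · have h2 : LSeries (fun _ => ((1 : ℝ) : ℂ)) s = riemannZeta s := by
      rw [← LSeries_one_eq_riemannZeta (by simpa using hs)]
      congr 1
    have h3 : ∫ t in Ioi (1 : ℝ), (∑ k ∈ Finset.Icc 1 ⌊t⌋₊, ((1 : ℝ) : ℂ)) * (t : ℂ) ^ (-((s : ℂ) + 1))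
        = ((∫ t in Ioi (1 : ℝ), (t ^ (-s) - Int.fract t * t ^ (-s - 1)) : ℝ) : ℂ) := by
      rw [← integral_complex_ofReal]
      refine setIntegral_congr_fun measurableSet_Ioi fun t ht => ?_
      have ht0 : (0 : ℝ) < t := one_pos.trans ht
      have hfl : ((⌊t⌋₊ : ℝ)) = t - Int.fract t := by
        rw [natCast_floor_eq_intCast_floor ht0.le, Int.self_sub_fract]
      have : t ^ (-s) - Int.fract t * t ^ (-s - 1) = (⌊t⌋₊ : ℝ) * t ^ (-(s + 1)) := by
        rw [hfl, show -(s + 1) = -s - 1 by ring, Real.rpow_sub_one ht0.ne']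
        field_simp
      simp only [this]
      push_cast
      rw [Complex.ofReal_cpow ht0.le]
      simp
    rw [h2, h3, integral_sub (integrableOn_Ioi_rpow_of_lt (by linarith) one_pos)
      (integrable_fract_mul_rpow (by linarith)), integral_Ioi_rpow_of_lt (by linarith) one_pos,
      h1] at hL
    rw [complexMGF_fractMeasure]
    have h4 : riemannZeta₁ s = (s - 1) * ((s - 1 : ℂ)⁻¹ * riemannZeta₁ s) := by
      field_simp
    rw [h4, hL]
    have h5 : (-(s : ℂ) + 1) ≠ 0 := by
      intro h; apply hsub; linear_combination -h
    push_cast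
    simp only [Real.one_rpow, Complex.ofReal_one]
    field_simp
    ring
  · refine Asymptotics.isBigO_of_le _ fun n => ?_
    simp

lemma riemannZeta₁_eq {s : ℂ} (hs : 0 < s.re) :
    riemannZeta₁ s = s - s * (s - 1) * complexMGF (fun t => -Real.log t) fractMeasure s := by
  have hint : ∀ z : ℂ, 0 < z.re →
      z.re ∈ interior (integrableExpSet (fun t => -Real.log t) fractMeasure) := fun z hz =>
    mem_interior.2 ⟨Ioi 0, fun x hx => mem_integrableExpSet_fractMeasure hx, isOpen_Ioi, hz⟩
  have hopen : IsOpen {z : ℂ | 0 < z.re} := isOpen_lt continuous_const Complex.continuous_re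
  have hpre : IsPreconnected {z : ℂ | 0 < z.re} := (convex_halfSpace_re_gt 0).isPreconnected
  have hG : AnalyticOnNhd ℂ (fun s : ℂ => s - s * (s - 1) *
      complexMGF (fun t => -Real.log t) fractMeasure s) {z : ℂ | 0 < z.re} := by
    intro z hz
    have := analyticAt_complexMGF (hint z hz)
    fun_prop
  have hF : AnalyticOnNhd ℂ riemannZeta₁ {z : ℂ | 0 < z.re} :=
    (differentiable_riemannZeta₁.differentiableOn).analyticOnNhd hopen
  have h2 : (2 : ℂ) ∈ {z : ℂ | 0 < z.re} := by simp
  refine hF.eqOn_of_preconnected_of_frequently_eq hG hpre h2 ?_ hs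
  have h3 : Tendsto (fun y : ℝ => (y : ℂ)) (𝓝[≠] 2) (𝓝[≠] (2 : ℂ)) :=
    Complex.continuous_ofReal.continuousAt.continuousWithinAt.tendsto_nhdsWithin
      fun y hy h => hy (Complex.ofReal_injective (by simpa using h))
  refine h3.frequently (Eventually.frequently ?_)
  filter_upwards [nhdsWithin_le_nhds (Ioi_mem_nhds (by norm_num : (1 : ℝ) < 2))] with y hy
  exact riemannZeta₁_eq_of_one_lt hy

lemma riemannZeta₁_re_pos {s : ℝ} (hs : 0 < s) : 0 < (riemannZeta₁ s).re := by
  rcases le_or_gt s 1 with h | h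
  · rw [riemannZeta₁_eq (by simpa using hs), complexMGF_ofReal]
    have : 0 ≤ mgf (fun t => -Real.log t) fractMeasure s := mgf_nonneg
    norm_cast
    have := mul_nonneg (mul_nonneg hs.le (sub_nonneg.2 h)) this
    linarith
  · have := riemannZeta_re_pos_of_one_lt h
    rw [riemannZeta_eq_inv_sub_mul (by exact_mod_cast h.ne'), ← Complex.ofReal_one,
      ← Complex.ofReal_sub, ← Complex.ofReal_inv, Complex.re_ofReal_mul] at this
    exact (pos_iff_pos_of_mul_pos this).1 (by simpa using h)

end Zeta

section PrimeSums
open Topology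

/-- `ℓ_p = -log (1 - 1/p)`. -/
noncomputable def primeLog (p : Nat.Primes) : ℝ := -Real.log (1 - 1 / (p : ℝ))

lemma two_le_primes (p : Nat.Primes) : (2 : ℝ) ≤ p := by exact_mod_cast p.2.two_le

lemma primes_pos (p : Nat.Primes) : (0 : ℝ) < p := by linarith [two_le_primes p]

lemma norm_primes_cpow (p : Nat.Primes) (z : ℂ) : ‖(p : ℂ) ^ z‖ = (p : ℝ) ^ z.re := by
  have := Complex.norm_cpow_eq_rpow_re_of_pos (primes_pos p) z
  simpa using this

lemma primeLog_nonneg (p : Nat.Primes) : 0 ≤ primeLog p := by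
  have := two_le_primes p
  have h : 1 / (p : ℝ) ≤ 1 / 2 := one_div_le_one_div_of_le two_pos this
  have h0 : 0 < 1 / (p : ℝ) := one_div_pos.2 (primes_pos p)
  exact neg_nonneg.2 (Real.log_nonpos (by linarith) (by linarith))

lemma primeLog_le_one (p : Nat.Primes) : primeLog p ≤ 1 := by
  have := two_le_primes p
  have h : 1 / (p : ℝ) ≤ 1 / 2 := one_div_le_one_div_of_le two_pos this
  have h1 : Real.log (1 / 2) ≤ Real.log (1 - 1 / (p : ℝ)) :=
    Real.log_le_log (by norm_num) (by linarith)
  rw [one_div, Real.log_inv] at h1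
  have := Real.log_two_lt_d9
  unfold primeLog
  linarith

lemma log_div_nonneg (p : Nat.Primes) : 0 ≤ Real.log p / ((p : ℝ) - 1) :=
  div_nonneg (Real.log_nonneg (by linarith [two_le_primes p])) (by linarith [two_le_primes p])

lemma log_div_le_one (p : Nat.Primes) : Real.log p / ((p : ℝ) - 1) ≤ 1 := by
  have := two_le_primes p
  rw [div_le_one (by linarith)]
  exact Real.log_le_sub_one_of_pos (primes_pos p)

lemma norm_log_one_sub_add_le {w : ℂ} (hw : ‖w‖ ≤ 3 / 4) :
    ‖Complex.log (1 - w) + w‖ ≤ 2 * ‖w‖ ^ 2 := by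
  have h := Complex.norm_log_one_add_sub_self_le (z := -w) (by rw [norm_neg]; linarith)
  rw [norm_neg, sub_neg_eq_add, ← sub_eq_add_neg] at h
  have h2 : (1 - ‖w‖)⁻¹ ≤ 4 := by
    rw [inv_le_comm₀ (by linarith) (by norm_num)]
    linarith
  nlinarith [sq_nonneg ‖w‖]

lemma ofReal_primeLog (p : Nat.Primes) :
    (primeLog p : ℂ) = -Complex.log (1 - (p : ℂ)⁻¹) := by
  have := two_le_primes p
  have h : 1 / (p : ℝ) ≤ 1 / 2 := one_div_le_one_div_of_le two_pos this
  rw [primeLog, Complex.ofReal_neg, Complex.ofReal_log (by linarith)]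
  simp

lemma abs_primeLog_sub_le (p : Nat.Primes) : |primeLog p - (p : ℝ)⁻¹| ≤ 2 * (p : ℝ) ^ (-2 : ℝ) := by
  have h2 := two_le_primes p
  have hp := primes_pos p
  have hn : ‖((p : ℂ)⁻¹)‖ = (p : ℝ)⁻¹ := by simp
  have h : (p : ℝ)⁻¹ ≤ 1 / 2 := by
    rw [one_div]; exact inv_anti₀ two_pos h2
  have := norm_log_one_sub_add_le (w := (p : ℂ)⁻¹) (by rw [hn]; linarith)
  rw [hn] at this
  have h3 : (p : ℝ) ^ (-2 : ℝ) = (p : ℝ)⁻¹ ^ 2 := by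
    rw [Real.rpow_neg hp.le, inv_pow]; norm_num
  rw [h3, ← Real.norm_eq_abs, ← Complex.norm_real, Complex.ofReal_sub, ofReal_primeLog, ← norm_neg]
  convert this using 2
  · rfl
  · push_cast
    ring

/-- The terms of the correction `∑ ℓ_p p^{-s} - log ζ(s+1)`. -/
noncomputable def corrTerm (p : Nat.Primes) (s : ℂ) : ℂ :=
  primeLog p * (p : ℂ) ^ (-s) + Complex.log (1 - (p : ℂ) ^ (-(s + 1)))

/-- The coefficients `log p (1/(p-1) - ℓ_p)`. -/
noncomputable def logCoeff (p : Nat.Primes) : ℝ :=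
  Real.log p * (1 / ((p : ℝ) - 1) - primeLog p)

lemma norm_primes_cpow_le {b : ℝ} (hb : -(1 / 2) < b) (p : Nat.Primes) {s : ℂ} (hs : b < s.re) :
    ‖(p : ℂ) ^ (-(s + 1))‖ ≤ 3 / 4 := by
  rw [norm_primes_cpow]
  have h2 := two_le_primes p
  have : (-(s + 1)).re ≤ -(1 / 2) := by simp; linarith
  calc (p : ℝ) ^ (-(s + 1)).re ≤ (p : ℝ) ^ (-(1 / 2) : ℝ) :=
        Real.rpow_le_rpow_of_exponent_le (by linarith) this
    _ ≤ (2 : ℝ) ^ (-(1 / 2) : ℝ) := Real.rpow_le_rpow_of_nonpos two_pos h2 (by norm_num)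
    _ ≤ 3 / 4 := by
      rw [Real.rpow_neg zero_le_two, ← Real.sqrt_eq_rpow, inv_le_comm₀ (by positivity) (by norm_num)]
      exact Real.le_sqrt_of_sq_le (by norm_num)

lemma one_sub_primes_cpow_mem_slitPlane {b : ℝ} (hb : -(1 / 2) < b) (p : Nat.Primes) {s : ℂ}
    (hs : b < s.re) : 1 - (p : ℂ) ^ (-(s + 1)) ∈ Complex.slitPlane := by
  left
  have h1 := norm_primes_cpow_le hb p hs
  have h2 := Complex.re_le_norm ((p : ℂ) ^ (-(s + 1)))
  simp only [Complex.sub_re, Complex.one_re]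
  linarith

lemma norm_corrTerm_le {b : ℝ} (hb : -(1 / 2) < b) (hb0 : b < 0) (p : Nat.Primes) {s : ℂ}
    (hs : b < s.re) : ‖corrTerm p s‖ ≤ 4 * (p : ℝ) ^ (-2 - 2 * b) := by
  have hp := primes_pos p
  have hp1 : (1 : ℝ) ≤ p := by linarith [two_le_primes p]
  have hpc : (p : ℂ) ≠ 0 := by exact_mod_cast hp.ne'
  have h1 := norm_log_one_sub_add_le (norm_primes_cpow_le hb p hs)
  have h2 : corrTerm p s = ((primeLog p - (p : ℝ)⁻¹ : ℝ) : ℂ) * (p : ℂ) ^ (-s) +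
      (Complex.log (1 - (p : ℂ) ^ (-(s + 1))) + (p : ℂ) ^ (-(s + 1))) := by
    rw [corrTerm, show -(s + 1) = -s - 1 by ring, Complex.cpow_sub _ _ hpc, Complex.cpow_one]
    push_cast
    ring
  rw [h2]
  refine (norm_add_le _ _).trans ?_
  have h3 : ‖((primeLog p - (p : ℝ)⁻¹ : ℝ) : ℂ) * (p : ℂ) ^ (-s)‖ ≤ 2 * (p : ℝ) ^ (-2 - 2 * b) := by
    rw [norm_mul, Complex.norm_real, norm_primes_cpow, Real.norm_eq_abs]
    calc _ ≤ 2 * (p : ℝ) ^ (-2 : ℝ) * (p : ℝ) ^ (-s).re := by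
          gcongr
          exact abs_primeLog_sub_le p
      _ = 2 * (p : ℝ) ^ (-2 + (-s).re) := by rw [mul_assoc, ← Real.rpow_add hp]
      _ ≤ _ := by
          gcongr 2 * ?_
          exact Real.rpow_le_rpow_of_exponent_le hp1 (by simp; linarith)
  have h4 : 2 * ‖(p : ℂ) ^ (-(s + 1))‖ ^ 2 ≤ 2 * (p : ℝ) ^ (-2 - 2 * b) := by
    rw [norm_primes_cpow, ← Real.rpow_mul_natCast hp.le]
    gcongr 2 * ?_
    exact Real.rpow_le_rpow_of_exponent_le hp1 (by simp; linarith)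
  linarith

lemma abs_logCoeff_le {b : ℝ} (hb0 : b < 0) (p : Nat.Primes) :
    |logCoeff p| ≤ 4 / (-b) * (p : ℝ) ^ (-2 - b) := by
  have hp := primes_pos p
  have h2 := two_le_primes p
  have hlog : Real.log p ≤ (p : ℝ) ^ (-b) / (-b) := Real.log_le_rpow_div hp.le (by linarith)
  have hlog0 : 0 ≤ Real.log p := Real.log_nonneg (by linarith)
  have h1 := abs_primeLog_sub_le p
  have h3 : (p : ℝ) ^ (-2 : ℝ) = ((p : ℝ) ^ 2)⁻¹ := by
    rw [Real.rpow_neg hp.le]; norm_num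
  have h4 : |1 / ((p : ℝ) - 1) - (p : ℝ)⁻¹| ≤ 2 * (p : ℝ) ^ (-2 : ℝ) := by
    have h5 : 1 / ((p : ℝ) - 1) - (p : ℝ)⁻¹ = 1 / (((p : ℝ) - 1) * p) := by
      have : (p : ℝ) - 1 ≠ 0 := by linarith
      field_simp
      ring
    have h6 : 0 < ((p : ℝ) - 1) * p := mul_pos (by linarith) hp
    rw [h5, abs_of_pos (one_div_pos.2 h6), h3, ← div_eq_mul_inv, div_le_div_iff₀ h6 (by positivity)]
    nlinarith
  have h7 : |1 / ((p : ℝ) - 1) - primeLog p| ≤ 4 * (p : ℝ) ^ (-2 : ℝ) := by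
    rw [abs_le] at *
    constructor <;> linarith [h1.1, h1.2, h4.1, h4.2]
  rw [logCoeff, abs_mul, abs_of_nonneg hlog0]
  calc _ ≤ (p : ℝ) ^ (-b) / (-b) * (4 * (p : ℝ) ^ (-2 : ℝ)) :=
        mul_le_mul hlog h7 (abs_nonneg _) (div_nonneg (Real.rpow_nonneg hp.le _) (by linarith))
    _ = 4 / (-b) * ((p : ℝ) ^ (-b) * (p : ℝ) ^ (-2 : ℝ)) := by ring
    _ = _ := by rw [← Real.rpow_add hp]; ring_nf

lemma norm_logCoeff_mul_le {b : ℝ} (hb0 : b < 0) (p : Nat.Primes) {s : ℂ} (hs : b < s.re) :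
    ‖(logCoeff p : ℂ) * (p : ℂ) ^ (-s)‖ ≤ 4 / (-b) * (p : ℝ) ^ (-2 - 2 * b) := by
  have hp := primes_pos p
  have hp1 : (1 : ℝ) ≤ p := by linarith [two_le_primes p]
  rw [norm_mul, Complex.norm_real, norm_primes_cpow, Real.norm_eq_abs]
  calc _ ≤ 4 / (-b) * (p : ℝ) ^ (-2 - b) * (p : ℝ) ^ (-b) := by
        refine mul_le_mul (abs_logCoeff_le hb0 p) ?_ (Real.rpow_nonneg hp.le _)
          (mul_nonneg (div_nonneg (by norm_num) (by linarith)) (Real.rpow_nonneg hp.le _))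
        exact Real.rpow_le_rpow_of_exponent_le hp1 (by simp; linarith)
    _ = _ := by rw [mul_assoc, ← Real.rpow_add hp]; ring_nf

lemma summable_primes_rpow {b : ℝ} (hb : -(1 / 2) < b) (C : ℝ) :
    Summable fun p : Nat.Primes => C * (p : ℝ) ^ (-2 - 2 * b) :=
  (Nat.Primes.summable_rpow.2 (by linarith)).mul_left C

/-- `h(s) = ∑ (ℓ_p p^{-s} + log (1 - p^{-s-1}))`. -/
noncomputable def corr (s : ℂ) : ℂ := ∑' p, corrTerm p s

/-- `g(s) = ∑ log p (1/(p-1) - ℓ_p) p^{-s}`. -/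
noncomputable def logSeries (s : ℂ) : ℂ := ∑' p : Nat.Primes, (logCoeff p : ℂ) * (p : ℂ) ^ (-s)

lemma isOpen_re_gt (b : ℝ) : IsOpen {s : ℂ | b < s.re} :=
  isOpen_lt continuous_const Complex.continuous_re

lemma differentiableOn_corrTerm {b : ℝ} (hb : -(1 / 2) < b) (p : Nat.Primes) :
    DifferentiableOn ℂ (corrTerm p) {s : ℂ | b < s.re} := by
  intro s hs
  have hpc : (p : ℂ) ≠ 0 := by exact_mod_cast (primes_pos p).ne'
  have h := one_sub_primes_cpow_mem_slitPlane hb p hs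
  have : NeZero (p : ℂ) := ⟨hpc⟩
  refine DifferentiableAt.differentiableWithinAt ?_
  unfold corrTerm
  fun_prop (disch := assumption)

lemma differentiableOn_corr {b : ℝ} (hb : -(1 / 2) < b) (hb0 : b < 0) :
    DifferentiableOn ℂ corr {s : ℂ | b < s.re} :=
  Complex.differentiableOn_tsum_of_summable_norm (summable_primes_rpow hb 4)
    (differentiableOn_corrTerm hb) (isOpen_re_gt b) fun p _ hs => norm_corrTerm_le hb hb0 p hs

lemma differentiableOn_logSeries {b : ℝ} (hb : -(1 / 2) < b) (hb0 : b < 0) :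
    DifferentiableOn ℂ logSeries {s : ℂ | b < s.re} := by
  refine Complex.differentiableOn_tsum_of_summable_norm (summable_primes_rpow hb (4 / (-b)))
    (fun p => ?_) (isOpen_re_gt b) fun p _ hs => norm_logCoeff_mul_le hb0 p hs
  have hpc : (p : ℂ) ≠ 0 := by exact_mod_cast (primes_pos p).ne'
  have : NeZero (p : ℂ) := ⟨hpc⟩
  fun_prop

lemma corr_zero : corr 0 = 0 := by
  have : ∀ p, corrTerm p 0 = 0 := fun p => by
    rw [corrTerm, ofReal_primeLog]
    simp [Complex.cpow_neg_one]
  simp [corr, this]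

lemma deriv_corrTerm_zero (p : Nat.Primes) : deriv (corrTerm p) 0 = logCoeff p := by
  have hp := primes_pos p
  have h2 := two_le_primes p
  have hpc : (p : ℂ) ≠ 0 := by exact_mod_cast hp.ne'
  have hpc1 : (p : ℂ) - 1 ≠ 0 := by
    have : (p : ℝ) - 1 ≠ 0 := by linarith
    exact_mod_cast this
  have h := one_sub_primes_cpow_mem_slitPlane (b := -(1 / 4)) (by norm_num) p (s := 0) (by simp)
  have h1 : HasDerivAt (fun s : ℂ => (p : ℂ) ^ (-s)) (-(Complex.log p)) 0 := by
    have := (hasDerivAt_neg (0 : ℂ)).const_cpow (c := (p : ℂ)) (Or.inl hpc)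
    simpa using this
  have h3 : HasDerivAt (fun s : ℂ => (p : ℂ) ^ (-(s + 1))) (-(Complex.log p) * (p : ℂ)⁻¹) 0 := by
    refine (h1.mul_const ((p : ℂ)⁻¹)).congr_of_eventuallyEq (Eventually.of_forall fun s => ?_)
    simp only
    rw [show -(s + 1) = -s - 1 by ring, Complex.cpow_sub _ _ hpc, Complex.cpow_one, div_eq_mul_inv]
  have h4 := (h1.const_mul (primeLog p : ℂ)).add ((h3.const_sub 1).clog h)
  rw [HasDerivAt.deriv (f := corrTerm p) h4, logCoeff]
  push_cast
  simp only [zero_add, Complex.cpow_neg_one]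
  have h5 : 1 - (p : ℂ)⁻¹ ≠ 0 := by
    rw [show 1 - (p : ℂ)⁻¹ = (p - 1) / p by field_simp]
    exact div_ne_zero hpc1 hpc
  have h6 : (p : ℂ)⁻¹ / (1 - (p : ℂ)⁻¹) = 1 / (p - 1) := by
    field_simp
  linear_combination Complex.log p * h6

lemma deriv_corr_zero : deriv corr 0 = logSeries 0 := by
  have h := Complex.hasSum_deriv_of_summable_norm
    (summable_primes_rpow (b := -(1 / 4)) (by norm_num) 4)
    (differentiableOn_corrTerm (by norm_num)) (isOpen_re_gt _)
    (fun p _ hs => norm_corrTerm_le (by norm_num) (by norm_num) p hs)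
    (z := 0) (by simp)
  simp_rw [deriv_corrTerm_zero] at h
  unfold corr logSeries
  simpa using h.tsum_eq.symm

end PrimeSums

section LaplaceTransforms
open MeasureTheory Set Topology

/-- The primes whose logarithm is at most `t`. -/
noncomputable def primesUpTo (t : ℝ) : Finset ℕ := (Finset.Iic ⌊Real.exp t⌋₊).filter Nat.Prime

lemma mem_primesUpTo {t : ℝ} {p : ℕ} : p ∈ primesUpTo t ↔ p.Prime ∧ Real.log p ≤ t := by
  rw [primesUpTo, Finset.mem_filter, Finset.mem_Iic, Nat.le_floor_iff (Real.exp_pos t).le, and_comm]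
  refine and_congr_right fun hp => ?_
  rw [Real.log_le_iff_le_exp (by exact_mod_cast hp.pos)]

lemma measurable_sum_primesUpTo (c : ℕ → ℝ) : Measurable fun t => ∑ p ∈ primesUpTo t, c p := by
  have : Measurable fun n : ℕ => ∑ p ∈ (Finset.Iic n).filter Nat.Prime, c p := measurable_from_top
  exact this.comp (Nat.measurable_floor.comp Real.measurable_exp)

lemma hasSum_sum_primesUpTo (c : ℕ → ℝ) (t : ℝ) :
    HasSum (fun p : Nat.Primes => if Real.log p ≤ t then c p else 0)
      (∑ p ∈ primesUpTo t, c p) := by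
  have h := hasSum_sum_of_ne_finset_zero (L := SummationFilter.unconditional _)
    (f := fun p : Nat.Primes => if Real.log p ≤ t then c p else 0)
    (s := (primesUpTo t).subtype Nat.Prime) (fun p hp => by
      exact if_neg fun h => hp (Finset.mem_subtype.2 (mem_primesUpTo.2 ⟨p.2, h⟩)))
  convert h using 1
  refine Eq.trans ?_ (Finset.sum_subtype_eq_sum_filter (p := Nat.Prime) (s := primesUpTo t)
    (fun q => if Real.log q ≤ t then c q else 0)).symm
  rw [Finset.filter_true_of_mem fun q hq => (mem_primesUpTo.1 hq).1]
  exact Finset.sum_congr rfl fun q hq => (if_pos (mem_primesUpTo.1 hq).2).symm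

lemma hasSum_integral_sum_primesUpTo {c : ℕ → ℝ} {φ : ℝ → ℝ} (hc : ∀ p : Nat.Primes, 0 ≤ c p)
    (hφ : IntegrableOn φ (Ioi 0)) (hφ0 : ∀ t, 0 < t → 0 ≤ φ t)
    (hs : Summable fun p : Nat.Primes => c p * ∫ t in Ioi (Real.log p), φ t) :
    IntegrableOn (fun t => (∑ p ∈ primesUpTo t, c p) * φ t) (Ioi 0) ∧
    HasSum (fun p : Nat.Primes => c p * ∫ t in Ioi (Real.log p), φ t)
      (∫ t in Ioi 0, (∑ p ∈ primesUpTo t, c p) * φ t) := by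
  have hlog : ∀ p : Nat.Primes, 0 < Real.log p := fun p =>
    Real.log_pos (by exact_mod_cast p.2.one_lt)
  set f : Nat.Primes → ℝ → ℝ := fun p t => (if Real.log p ≤ t then c p else 0) * φ t with hf
  have hfe : ∀ p, f p = (Ici (Real.log p)).indicator fun t => c p * φ t := by
    intro p
    ext t
    by_cases h : Real.log p ≤ t <;> simp [hf, h]
  have hfi : ∀ p, IntegrableOn (f p) (Ioi 0) := fun p => by
    rw [hfe]
    exact (hφ.const_mul _).indicator measurableSet_Ici
  have hfv : ∀ p, ∫ t in Ioi 0, f p t = c p * ∫ t in Ioi (Real.log p), φ t := fun p => by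
    rw [hfe, setIntegral_indicator measurableSet_Ici,
      inter_eq_self_of_subset_right (s := Ioi 0)
        (t := Ici (Real.log p)) (fun t ht => (hlog p).trans_le ht),
      integral_Ici_eq_integral_Ioi, integral_const_mul]
  have hf0 : ∀ p, ∀ t ∈ Ioi (0 : ℝ), 0 ≤ f p t := fun p t ht => by
    have := hc p
    have := hφ0 t ht
    simp only [hf]
    split_ifs <;> positivity
  have hfn : ∀ p, ∫ t in Ioi 0, ‖f p t‖ = c p * ∫ t in Ioi (Real.log p), φ t := fun p => by
    rw [← hfv]
    exact setIntegral_congr_fun measurableSet_Ioi fun t ht => Real.norm_of_nonneg (hf0 p t ht)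
  have hpt : ∀ t, HasSum (fun p => f p t) ((∑ p ∈ primesUpTo t, c p) * φ t) := fun t =>
    (hasSum_sum_primesUpTo c t).mul_right _
  constructor
  · refine ⟨(measurable_sum_primesUpTo c).aestronglyMeasurable.mul hφ.1, ?_⟩
    have hlin : ∑' p, ∫⁻ t in Ioi 0, ENNReal.ofReal (f p t) ≠ ⊤ := by
      have hae : ∀ p, 0 ≤ᵐ[volume.restrict (Ioi 0)] f p := fun p =>
        (ae_restrict_mem measurableSet_Ioi).mono fun t ht => hf0 p t ht
      simp_rw [← fun p => ofReal_integral_eq_lintegral_ofReal (hfi p) (hae p), hfv]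
      exact hs.tsum_ofReal_ne_top
    rw [← lintegral_tsum (fun p => (hfi p).aemeasurable.ennreal_ofReal)] at hlin
    rw [hasFiniteIntegral_iff_ofReal ((ae_restrict_mem measurableSet_Ioi).mono fun t ht =>
      (hpt t).nonneg fun p => hf0 p t ht)]
    refine lt_of_eq_of_lt ?_ hlin.lt_top
    refine setLIntegral_congr_fun measurableSet_Ioi fun t ht => ?_
    rw [← (hpt t).tsum_eq]
    exact ENNReal.ofReal_tsum_of_nonneg (fun p => hf0 p t ht) (hpt t).summable
  · have h := hasSum_integral_of_summable_integral_norm (F := f) hfi (by simpa only [hfn] using hs)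
    simp only [hfv, fun t => (hpt t).tsum_eq] at h
    exact h

lemma integral_exp_neg_mul_Ioi {s : ℝ} (hs : 0 < s) (l : ℝ) :
    ∫ t in Ioi l, Real.exp (-s * t) = Real.exp (-s * l) / s := by
  rw [integral_exp_mul_Ioi (by linarith), neg_div_neg_eq]

lemma integrableOn_mul_exp_neg_mul {s : ℝ} (hs : 0 < s) :
    IntegrableOn (fun t => t * Real.exp (-s * t)) (Ioi 0) := by
  have := Real.GammaIntegral_convergent (s := 2) (by norm_num)
  have h2 := (integrableOn_Ioi_comp_mul_left_iff _ 0 hs).2 (by simpa using this)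
  refine IntegrableOn.congr_fun (h2.const_mul s⁻¹) (fun t ht => ?_) measurableSet_Ioi
  norm_num
  field_simp

lemma integral_mul_exp_neg_mul_Ioi {s : ℝ} (hs : 0 < s) {l : ℝ} (hl : 0 ≤ l) :
    ∫ t in Ioi l, t * Real.exp (-s * t) = Real.exp (-s * l) * (l / s + 1 / s ^ 2) := by
  have h := integral_Ioi_of_hasDerivAt_of_tendsto' (a := l) (m := 0)
    (f := fun t => -(Real.exp (-s * t) * (t / s + 1 / s ^ 2)))
    (f' := fun t => t * Real.exp (-s * t)) (fun t _ => ?_)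
    ((integrableOn_mul_exp_neg_mul hs).mono_set (Ioi_subset_Ioi hl)) ?_
  · rw [h]; ring
  · have h1 : HasDerivAt (fun t => Real.exp (-s * t)) (Real.exp (-s * t) * (-s)) t := by
      simpa using ((hasDerivAt_id t).const_mul (-s)).exp
    have h2 : HasDerivAt (fun t => t / s + 1 / s ^ 2) (1 / s) t :=
      ((hasDerivAt_id t).div_const s).add_const _
    refine (h1.mul h2).neg.congr_deriv ?_
    field_simp
    ring
  · have h1 : Tendsto (fun t => (s * t) * Real.exp (-(s * t))) atTop (𝓝 0) := by
      have := (Real.tendsto_pow_mul_exp_neg_atTop_nhds_zero 1).comp (tendsto_id.const_mul_atTop hs)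
      simpa [Function.comp_def] using this
    have h2 : Tendsto (fun t => Real.exp (-(s * t))) atTop (𝓝 0) := by
      have := (Real.tendsto_pow_mul_exp_neg_atTop_nhds_zero 0).comp (tendsto_id.const_mul_atTop hs)
      simpa [Function.comp_def] using this
    have h3 := ((h1.add h2).const_mul (-(1 / s ^ 2)))
    simp only [add_zero, mul_zero] at h3
    refine h3.congr fun t => ?_
    rw [neg_mul]
    field_simp

lemma integral_mul_log_mul_exp_neg :
    ∫ t in Ioi (0 : ℝ), t * Real.log t * Real.exp (-t) = 1 - Real.eulerMascheroniConstant := by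
  have h1 := Complex.hasDerivAt_GammaIntegral (s := 2) (by norm_num)
  have h2 : HasDerivAt Complex.Gamma (-Real.eulerMascheroniConstant + 1 : ℂ) 2 := by
    have := Complex.hasDerivAt_Gamma_nat 1
    norm_num at this
    exact this
  have h3 : Complex.Gamma =ᶠ[𝓝 2] Complex.GammaIntegral := by
    filter_upwards [(isOpen_lt continuous_const Complex.continuous_re).mem_nhds
      (show (0 : ℝ) < (2 : ℂ).re by norm_num)] with s hs
    exact Complex.Gamma_eq_integral hs
  have h4 := (h1.congr_of_eventuallyEq h3).unique h2
  rw [← Complex.ofReal_inj, ← integral_complex_ofReal]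
  push_cast
  rw [sub_eq_neg_add, ← h4]
  refine setIntegral_congr_fun measurableSet_Ioi fun t ht => ?_
  norm_num
  ring

lemma integrableOn_mul_log_mul_exp_neg :
    IntegrableOn (fun t : ℝ => t * Real.log t * Real.exp (-t)) (Ioi 0) := by
  by_contra h
  have h1 := integral_mul_log_mul_exp_neg
  rw [integral_undef h] at h1
  linarith [Real.eulerMascheroniConstant_lt_two_thirds]

lemma integrableOn_mul_log_mul_exp_neg_mul {s : ℝ} (hs : 0 < s) :
    IntegrableOn (fun t => t * Real.log t * Real.exp (-s * t)) (Ioi 0) := by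
  have h := (integrableOn_Ioi_comp_mul_left_iff _ 0 hs).2
    (by simpa using integrableOn_mul_log_mul_exp_neg)
  refine IntegrableOn.congr_fun ((h.const_mul s⁻¹).sub
    ((integrableOn_mul_exp_neg_mul hs).const_mul (Real.log s)))
    (fun t (ht : 0 < t) => ?_) measurableSet_Ioi
  simp only [Pi.sub_apply]
  rw [Real.log_mul hs.ne' ht.ne', neg_mul]
  field_simp
  ring

lemma integral_mul_log_mul_exp_neg_mul {s : ℝ} (hs : 0 < s) :
    ∫ t in Ioi (0 : ℝ), t * Real.log t * Real.exp (-s * t) =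
      (1 - Real.eulerMascheroniConstant - Real.log s) / s ^ 2 := by
  have h := integral_comp_mul_left_Ioi (fun t => t * Real.log t * Real.exp (-t)) 0 hs
  rw [mul_zero, integral_mul_log_mul_exp_neg] at h
  have h1 : ∫ t in Ioi (0 : ℝ), (s * t) * Real.log (s * t) * Real.exp (-(s * t)) =
      s * (∫ t in Ioi (0 : ℝ), t * Real.log t * Real.exp (-s * t)) +
      s * Real.log s * ∫ t in Ioi (0 : ℝ), t * Real.exp (-s * t) := by
    rw [← integral_const_mul, ← integral_const_mul, ← integral_add
      ((integrableOn_mul_log_mul_exp_neg_mul hs).const_mul _)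
      ((integrableOn_mul_exp_neg_mul hs).const_mul _)]
    refine setIntegral_congr_fun measurableSet_Ioi fun t (ht : 0 < t) => ?_
    rw [Real.log_mul hs.ne' ht.ne', neg_mul]
    ring
  rw [h1, integral_mul_exp_neg_mul_Ioi hs le_rfl] at h
  simp only [mul_zero, Real.exp_zero, zero_div, zero_add, one_mul, smul_eq_mul] at h
  field_simp at h ⊢
  linarith

end LaplaceTransforms

section MertensGap
open MeasureTheory Set Topology

/-- A tangent-line minorant of `t log (e^γ γ_r)`, where `r` counts the primes up to `e^t`. -/
noncomputable def mertensGap (t : ℝ) : ℝ :=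
  (Real.eulerMascheroniConstant + ∑ p ∈ primesUpTo t, Real.log p / ((p : ℝ) - 1)) - t +
    t * (Real.log t + Real.eulerMascheroniConstant -
      ∑ p ∈ primesUpTo t, -Real.log (1 - 1 / (p : ℝ)))

lemma measurable_mertensGap : Measurable mertensGap := by
  have h1 := measurable_sum_primesUpTo fun p => Real.log p / ((p : ℝ) - 1)
  have h2 := measurable_sum_primesUpTo fun p => -Real.log (1 - 1 / (p : ℝ))
  unfold mertensGap
  fun_prop

lemma summable_mul_primes_rpow {c : Nat.Primes → ℝ} {x : ℝ} (hx : 2 < x) (h0 : ∀ p, 0 ≤ c p)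
    (hc : ∀ p : Nat.Primes, c p ≤ p) : Summable fun p => c p * (p : ℝ) ^ (-x) := by
  refine Summable.of_nonneg_of_le (fun p => mul_nonneg (h0 p) (Real.rpow_nonneg (primes_pos p).le _))
    (fun p => ?_) (Nat.Primes.summable_rpow.2 (show 1 - x < -1 by linarith))
  calc c p * (p : ℝ) ^ (-x) ≤ p * (p : ℝ) ^ (-x) :=
        mul_le_mul_of_nonneg_right (hc p) (Real.rpow_nonneg (primes_pos p).le _)
    _ = _ := by rw [sub_eq_add_neg, Real.rpow_add (primes_pos p), Real.rpow_one]

lemma exp_neg_mul_log_primes (x : ℝ) (p : Nat.Primes) :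
    Real.exp (-x * Real.log p) = (p : ℝ) ^ (-x) := by
  rw [Real.rpow_def_of_pos (primes_pos p), mul_comm]

lemma laplace_mertensGap_real {x : ℝ} (hx : 2 < x) :
    IntegrableOn (fun t => mertensGap t * Real.exp (-x * t)) (Ioi 0) ∧
    x ^ 2 * ∫ t in Ioi (0 : ℝ), mertensGap t * Real.exp (-x * t) =
      x * (Real.eulerMascheroniConstant + ∑' p : Nat.Primes, logCoeff p * (p : ℝ) ^ (-x)) -
        Real.log x - ∑' p : Nat.Primes, primeLog p * (p : ℝ) ^ (-x) := by
  have hx0 : 0 < x := by linarith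
  have hlog0 : ∀ p : Nat.Primes, 0 ≤ Real.log p := fun p =>
    Real.log_nonneg (by linarith [two_le_primes p])
  have hlogle : ∀ p : Nat.Primes, Real.log p ≤ p := fun p => Real.log_le_self (primes_pos p).le
  have hs1 := summable_mul_primes_rpow hx log_div_nonneg
    fun p => (log_div_le_one p).trans (by linarith [two_le_primes p])
  have hs2 := summable_mul_primes_rpow hx primeLog_nonneg
    fun p => (primeLog_le_one p).trans (by linarith [two_le_primes p])
  have hs3 := summable_mul_primes_rpow (c := fun p => primeLog p * Real.log p) hx
    (fun p => mul_nonneg (primeLog_nonneg p) (hlog0 p))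
    fun p => (mul_le_of_le_one_left (hlog0 p) (primeLog_le_one p)).trans (hlogle p)
  have hint0 : IntegrableOn (fun t => Real.exp (-x * t)) (Ioi 0) :=
    integrableOn_exp_mul_Ioi (by linarith) 0
  have hint1 := integrableOn_mul_exp_neg_mul hx0
  have hintlog := integrableOn_mul_log_mul_exp_neg_mul hx0
  have e1 : ∀ p : Nat.Primes, Real.log p / ((p : ℝ) - 1) *
      (∫ t in Ioi (Real.log p), Real.exp (-x * t)) =
      x⁻¹ * (Real.log p / ((p : ℝ) - 1) * (p : ℝ) ^ (-x)) := fun p => by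
    rw [integral_exp_neg_mul_Ioi hx0, exp_neg_mul_log_primes]
    ring
  have e2 : ∀ p : Nat.Primes, -Real.log (1 - 1 / (p : ℝ)) *
      (∫ t in Ioi (Real.log p), t * Real.exp (-x * t)) =
      x⁻¹ * (primeLog p * Real.log p * (p : ℝ) ^ (-x)) +
        (x ^ 2)⁻¹ * (primeLog p * (p : ℝ) ^ (-x)) := fun p => by
    rw [integral_mul_exp_neg_mul_Ioi hx0 (hlog0 p), exp_neg_mul_log_primes, primeLog]
    ring
  obtain ⟨hA, hA'⟩ := hasSum_integral_sum_primesUpTo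
    (c := fun p => Real.log p / ((p : ℝ) - 1)) log_div_nonneg hint0
    (fun t _ => (Real.exp_pos _).le) (by simpa only [e1] using hs1.mul_left _)
  obtain ⟨hL, hL'⟩ := hasSum_integral_sum_primesUpTo
    (c := fun p => -Real.log (1 - 1 / (p : ℝ))) primeLog_nonneg hint1
    (fun t ht => mul_nonneg ht.le (Real.exp_pos _).le)
    (by simpa only [e2] using (hs3.mul_left _).add (hs2.mul_left _))
  simp only [e1] at hA'
  simp only [e2] at hL'
  have vA := hA'.unique (hs1.hasSum.mul_left _)
  have vL := hL'.unique ((hs3.hasSum.mul_left _).add (hs2.hasSum.mul_left _))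
  have hdecomp : (fun t => mertensGap t * Real.exp (-x * t)) = fun t =>
      Real.eulerMascheroniConstant * Real.exp (-x * t) +
      (∑ p ∈ primesUpTo t, Real.log p / ((p : ℝ) - 1)) * Real.exp (-x * t) +
      (Real.eulerMascheroniConstant - 1) * (t * Real.exp (-x * t)) +
      t * Real.log t * Real.exp (-x * t) -
      (∑ p ∈ primesUpTo t, -Real.log (1 - 1 / (p : ℝ))) * (t * Real.exp (-x * t)) := by
    ext t
    unfold mertensGap
    ring
  have i1 := hint0.const_mul Real.eulerMascheroniConstant
  have i2 := hint1.const_mul (Real.eulerMascheroniConstant - 1)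
  have i3 : IntegrableOn (fun t => Real.eulerMascheroniConstant * Real.exp (-x * t) +
      (∑ p ∈ primesUpTo t, Real.log p / ((p : ℝ) - 1)) * Real.exp (-x * t)) (Ioi 0) := i1.add hA
  have i4 : IntegrableOn (fun t => Real.eulerMascheroniConstant * Real.exp (-x * t) +
      (∑ p ∈ primesUpTo t, Real.log p / ((p : ℝ) - 1)) * Real.exp (-x * t) +
      (Real.eulerMascheroniConstant - 1) * (t * Real.exp (-x * t))) (Ioi 0) := i3.add i2
  have i5 : IntegrableOn (fun t => Real.eulerMascheroniConstant * Real.exp (-x * t) +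
      (∑ p ∈ primesUpTo t, Real.log p / ((p : ℝ) - 1)) * Real.exp (-x * t) +
      (Real.eulerMascheroniConstant - 1) * (t * Real.exp (-x * t)) +
      t * Real.log t * Real.exp (-x * t)) (Ioi 0) := i4.add hintlog
  rw [hdecomp]
  refine ⟨i5.sub hL, ?_⟩
  rw [integral_sub i5 hL, integral_add i4 hintlog, integral_add i3 i2, integral_add i1 hA,
    integral_const_mul, integral_const_mul, vA, vL, integral_mul_log_mul_exp_neg_mul hx0,
    integral_exp_neg_mul_Ioi hx0, integral_mul_exp_neg_mul_Ioi hx0 le_rfl]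
  have hc : ∑' p : Nat.Primes, logCoeff p * (p : ℝ) ^ (-x) =
      ∑' p : Nat.Primes, Real.log p / ((p : ℝ) - 1) * (p : ℝ) ^ (-x) -
      ∑' p : Nat.Primes, primeLog p * Real.log p * (p : ℝ) ^ (-x) := by
    rw [← hs1.tsum_sub hs3]
    refine tsum_congr fun p => ?_
    rw [logCoeff]
    ring
  rw [hc]
  simp only [mul_zero, Real.exp_zero, zero_div, zero_add, one_mul]
  field_simp
  ring

lemma exp_laplace_mertensGap {x : ℝ} (hx : 2 < x) :
    ∃ w : ℝ, Complex.exp w = riemannZeta₁ (x + 1) ∧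
      (x : ℂ) ^ 2 * ((∫ t in Ioi (0 : ℝ), mertensGap t * Real.exp (-x * t) : ℝ) : ℂ) =
        x * (Real.eulerMascheroniConstant + logSeries x) - corr x - w := by
  have hx0 : 0 < x := by linarith
  have hcp : ∀ (p : Nat.Primes) (y : ℝ), (p : ℂ) ^ (y : ℂ) = (((p : ℝ) ^ y : ℝ) : ℂ) := fun p y => by
    rw [Complex.ofReal_cpow (primes_pos p).le, Complex.ofReal_natCast]
  have hcpx : ∀ p : Nat.Primes, (p : ℂ) ^ (-x : ℂ) = (((p : ℝ) ^ (-x) : ℝ) : ℂ) := fun p => by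
    exact_mod_cast hcp p (-x)
  have hlg : ∀ p : Nat.Primes, Complex.log (1 - (p : ℂ) ^ (-((x : ℂ) + 1))) =
      ((Real.log (1 - (p : ℝ) ^ (-(x + 1))) : ℝ) : ℂ) := fun p => by
    rw [show (-((x : ℂ) + 1)) = ((-(x + 1) : ℝ) : ℂ) by push_cast; ring, hcp, Complex.ofReal_log]
    · push_cast; rfl
    · have := Real.rpow_le_one_of_one_le_of_nonpos (show (1 : ℝ) ≤ p by linarith [two_le_primes p])
        (show -(x + 1) ≤ 0 by linarith)
      linarith
  have hs2 := summable_mul_primes_rpow hx primeLog_nonneg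
    fun p => (primeLog_le_one p).trans (by linarith [two_le_primes p])
  have hcorr : Summable fun p => corrTerm p x :=
    .of_norm_bounded (summable_primes_rpow (b := -(1 / 4)) (by norm_num) 4)
      fun p => norm_corrTerm_le (by norm_num) (by norm_num) p (by simp; linarith)
  have hterm : ∀ p : Nat.Primes, corrTerm p x = ((primeLog p * (p : ℝ) ^ (-x) : ℝ) : ℂ) +
      ((Real.log (1 - (p : ℝ) ^ (-(x + 1))) : ℝ) : ℂ) := fun p => by
    rw [corrTerm, hlg, hcpx]
    push_cast
    rfl
  have hs2' : Summable fun p : Nat.Primes => ((primeLog p * (p : ℝ) ^ (-x) : ℝ) : ℂ) :=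
    Complex.ofRealCLM.summable hs2
  have hv : Summable fun p : Nat.Primes => ((Real.log (1 - (p : ℝ) ^ (-(x + 1))) : ℝ) : ℂ) := by
    have := hcorr.sub hs2'
    simpa [hterm] using this
  have hcorr' : corr x = ((∑' p : Nat.Primes, primeLog p * (p : ℝ) ^ (-x) : ℝ) : ℂ) +
      ((∑' p : Nat.Primes, Real.log (1 - (p : ℝ) ^ (-(x + 1))) : ℝ) : ℂ) := by
    rw [Complex.ofReal_tsum, Complex.ofReal_tsum,
      ← Summable.tsum_add hs2' hv, corr]
    exact tsum_congr hterm
  have hlS : logSeries x = ((∑' p : Nat.Primes, logCoeff p * (p : ℝ) ^ (-x) : ℝ) : ℂ) := by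
    rw [logSeries, Complex.ofReal_tsum]
    exact tsum_congr fun p => by rw [hcpx]; push_cast; rfl
  refine ⟨Real.log x - ∑' p : Nat.Primes, Real.log (1 - (p : ℝ) ^ (-(x + 1))), ?_, ?_⟩
  · have hz := riemannZeta_eulerProduct_exp_log (s := (x : ℂ) + 1) (by simp; linarith)
    simp_rw [hlg] at hz
    rw [tsum_neg, ← Complex.ofReal_tsum] at hz
    rw [Complex.ofReal_sub, sub_eq_add_neg, Complex.exp_add, hz, Complex.ofReal_log hx0.le,
      Complex.exp_log (by exact_mod_cast hx0.ne'),
      riemannZeta_eq_inv_sub_mul (by simpa using hx0.ne'), add_sub_cancel_right,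
      mul_inv_cancel_left₀ (by exact_mod_cast hx0.ne')]
  · rw [hcorr', hlS, ← Complex.ofReal_pow, ← Complex.ofReal_mul, (laplace_mertensGap_real hx).2]
    push_cast
    ring

end MertensGap

section Nonneg
open Topology

lemma gammaP_nonneg {P : Finset ℕ} (hP : ∀ p ∈ P, p.Prime) : 0 ≤ gammaP P := by
  have h1 : ∀ p ∈ P, (1 : ℝ) ≤ p := fun p hp => by exact_mod_cast (hP p hp).one_le
  refine mul_nonneg (Finset.prod_nonneg fun p hp => ?_) (add_nonneg ?_ (Finset.sum_nonneg
    fun p hp => ?_))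
  · have := h1 p hp
    rw [sub_nonneg, div_le_one (by linarith)]
    exact this
  · linarith [Real.one_half_lt_eulerMascheroniConstant]
  · exact div_nonneg (Real.log_nonneg (h1 p hp)) (by linarith [h1 p hp])

lemma gammaR_nonneg (r : ℕ) : 0 ≤ gammaR r := by
  refine gammaP_nonneg fun p hp => ?_
  obtain ⟨k, -, rfl⟩ := Finset.mem_image.1 hp
  exact Nat.prime_nth_prime k

lemma mertensGap_nonneg {t : ℝ} (ht : 0 < t)
    (h : Real.exp (-Real.eulerMascheroniConstant) ≤ gammaP (primesUpTo t)) :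
    0 ≤ mertensGap t := by
  set A := Real.eulerMascheroniConstant + ∑ p ∈ primesUpTo t, Real.log p / ((p : ℝ) - 1) with hA
  have h2 : ∀ p ∈ primesUpTo t, (2 : ℝ) ≤ p := fun p hp => by
    exact_mod_cast (mem_primesUpTo.1 hp).1.two_le
  have hA0 : 0 < A := by
    refine add_pos_of_pos_of_nonneg (by linarith [Real.one_half_lt_eulerMascheroniConstant])
      (Finset.sum_nonneg fun p hp => ?_)
    exact div_nonneg (Real.log_nonneg (by linarith [h2 p hp])) (by linarith [h2 p hp])
  have hf0 : ∀ p ∈ primesUpTo t, 1 - 1 / (p : ℝ) ≠ 0 := fun p hp => by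
    have := h2 p hp
    have h3 : 1 / (p : ℝ) < 1 := by rw [div_lt_one (by linarith)]; linarith
    linarith
  have hlog := Real.log_le_log (Real.exp_pos _) h
  rw [Real.log_exp, gammaP, Real.log_mul (Finset.prod_ne_zero_iff.2 hf0) hA0.ne',
    Real.log_prod hf0] at hlog
  have htan := Real.log_le_sub_one_of_pos (div_pos hA0 ht)
  rw [Real.log_div hA0.ne' ht.ne'] at htan
  have : mertensGap t = t * ((A / t - 1) + Real.log t + Real.eulerMascheroniConstant +
      ∑ p ∈ primesUpTo t, Real.log (1 - 1 / (p : ℝ))) := by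
    rw [mertensGap, ← hA, Finset.sum_neg_distrib]
    field_simp
    ring
  rw [this]
  exact mul_nonneg ht.le (by linarith)

lemma gammaP_primesUpTo (t : ℝ) :
    gammaP (primesUpTo t) = gammaR (Nat.primeCounting ⌊Real.exp t⌋₊) := by
  rw [gammaR]
  congr 1
  ext p
  simp only [primesUpTo, Finset.mem_filter, Finset.mem_Iic, Finset.mem_image, Finset.mem_range,
    Nat.primeCounting, Nat.primeCounting']
  constructor
  · rintro ⟨h, hp⟩
    exact ⟨Nat.count Nat.Prime p, Nat.count_strict_mono hp (Nat.lt_succ_of_le h), Nat.nth_count hp⟩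
  · rintro ⟨k, hk, rfl⟩
    exact ⟨Nat.le_of_lt_succ (Nat.nth_lt_of_lt_count hk), Nat.prime_nth_prime k⟩

lemma eventually_mertensGap_nonneg
    (h : {r : ℕ | gammaR r < Real.exp (-Real.eulerMascheroniConstant)}.Finite) :
    ∀ᶠ t in atTop, 0 ≤ mertensGap t := by
  have h1 : ∀ᶠ r : ℕ in atTop, Real.exp (-Real.eulerMascheroniConstant) ≤ gammaR r := by
    have := h.eventually_cofinite_notMem
    rw [Nat.cofinite_eq_atTop] at this
    exact this.mono fun r hr => not_lt.1 hr
  have h2 : Tendsto (fun t : ℝ => Nat.primeCounting ⌊Real.exp t⌋₊) atTop atTop :=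
    Nat.tendsto_primeCounting.comp (tendsto_nat_floor_atTop.comp Real.tendsto_exp_atTop)
  filter_upwards [h2.eventually h1, eventually_gt_atTop 0] with t ht ht0
  exact mertensGap_nonneg ht0 (by rwa [gammaP_primesUpTo])

end Nonneg

section Zeros

/-- If the Riemann hypothesis fails, there is a zero in the right half of the critical strip. -/
lemma exists_zero_of_not_RH (hRH : ¬ RiemannHypothesis) :
    ∃ s : ℂ, riemannZeta s = 0 ∧ 1 / 2 < s.re ∧ s.re < 1 := by
  have hlt : ∀ s : ℂ, riemannZeta s = 0 → s.re < 1 := fun s hs => by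
    by_contra! h
    exact riemannZeta_ne_zero_of_one_le_re h hs
  unfold RiemannHypothesis at hRH
  push Not at hRH
  obtain ⟨s, hs, htriv, hs1, hre⟩ := hRH
  rcases lt_or_gt_of_ne hre with h | h
  swap
  · exact ⟨s, hs, h, hlt s hs⟩
  have hs0 : s ≠ 0 := by
    rintro rfl
    norm_num [riemannZeta_zero] at hs
  have hneg : ∀ n : ℕ, 1 - s ≠ -n := fun n hn => by
    have := congrArg Complex.re hn
    simp at this
    have : (0 : ℝ) ≤ n := n.cast_nonneg
    linarith
  have hfe := riemannZeta_one_sub hneg (by simpa using hs0)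
  rw [sub_sub_cancel, hs, eq_comm] at hfe
  have hpi : (2 * (Real.pi : ℂ)) ≠ 0 := by simp [Real.pi_ne_zero]
  simp only [mul_eq_zero, Complex.Gamma_ne_zero hneg, Complex.cpow_eq_zero_iff, hpi, false_and,
    two_ne_zero, false_or] at hfe
  rcases hfe with hcos | hz
  · exfalso
    obtain ⟨k, hk⟩ := Complex.cos_eq_zero_iff.1 hcos
    have hpi' : (Real.pi : ℂ) ≠ 0 := by simp [Real.pi_ne_zero]
    have hk' : s = -2 * (k : ℂ) := by
      field_simp at hk
      linear_combination -hk
    have hk0 : 0 < k := by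
      have hre' := congrArg Complex.re hk'
      simp at hre'
      have h1 : k ≠ 0 := by
        rintro rfl
        exact hs0 (by simpa using hk')
      have h2 : (-1 : ℝ) < k := by linarith
      have h3 : -1 < k := by exact_mod_cast h2
      omega
    obtain ⟨n, rfl⟩ : ∃ n : ℕ, k = n + 1 := ⟨(k - 1).toNat, by omega⟩
    exact htriv n (by rw [hk']; push_cast; ring)
  · refine ⟨1 - s, hz, ?_, hlt _ hz⟩
    simp
    linarith

end Zeros

section Continuation
open MeasureTheory ProbabilityTheory Topology Set

/-- A logarithm of the entire function `(s - 1) ζ(s)`, shifted to the origin and regularised. -/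
noncomputable def logNumerator (s : ℂ) : ℂ :=
  s * (Real.eulerMascheroniConstant + logSeries s) - corr s - Complex.log (riemannZeta₁ (s + 1))

lemma logNumerator_zero : logNumerator 0 = 0 := by
  simp [logNumerator, corr_zero, riemannZeta₁_one]

lemma isOpen_shifted_slitPlane (b : ℝ) :
    IsOpen {s : ℂ | b < s.re ∧ riemannZeta₁ (s + 1) ∈ Complex.slitPlane} :=
  (isOpen_re_gt b).inter (Complex.isOpen_slitPlane.preimage
    (differentiable_riemannZeta₁.continuous.comp (continuous_id.add continuous_const)))

lemma differentiableOn_logNumerator {b : ℝ} (hb : -(1 / 2) < b) (hb0 : b < 0) :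
    DifferentiableOn ℂ logNumerator
      {s : ℂ | b < s.re ∧ riemannZeta₁ (s + 1) ∈ Complex.slitPlane} := by
  have h1 := (differentiableOn_logSeries hb hb0).mono
    (s := {s : ℂ | b < s.re ∧ riemannZeta₁ (s + 1) ∈ Complex.slitPlane}) fun s hs => hs.1
  have h2 := (differentiableOn_corr hb hb0).mono
    (s := {s : ℂ | b < s.re ∧ riemannZeta₁ (s + 1) ∈ Complex.slitPlane}) fun s hs => hs.1
  have h3 : Differentiable ℂ fun s => riemannZeta₁ (s + 1) :=
    differentiable_riemannZeta₁.comp (differentiable_id.add_const 1)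
  exact ((differentiableOn_id.mul ((differentiableOn_const _).add h1)).sub h2).sub
    (h3.differentiableOn.clog fun s hs => hs.2)

lemma deriv_logNumerator_zero : deriv logNumerator 0 = 0 := by
  have hmem : {s : ℂ | -(1 / 4) < s.re} ∈ 𝓝 (0 : ℂ) := (isOpen_re_gt _).mem_nhds (by simp)
  have h1 : HasDerivAt logSeries (deriv logSeries 0) 0 :=
    ((differentiableOn_logSeries (by norm_num) (by norm_num)).differentiableAt hmem).hasDerivAt
  have h2 : HasDerivAt corr (logSeries 0) 0 := by
    rw [← deriv_corr_zero]
    exact ((differentiableOn_corr (by norm_num) (by norm_num)).differentiableAt hmem).hasDerivAt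
  have h3 : HasDerivAt (fun s => riemannZeta₁ (s + 1)) (Real.eulerMascheroniConstant : ℂ) 0 := by
    have : HasDerivAt riemannZeta₁ (Real.eulerMascheroniConstant : ℂ) ((0 : ℂ) + 1) := by
      rw [zero_add, ← deriv_riemannZeta₁_one]
      exact differentiable_riemannZeta₁.differentiableAt.hasDerivAt
    exact this.comp_add_const 0 1
  have h4 := (((hasDerivAt_id (0 : ℂ)).mul (h1.const_add (Real.eulerMascheroniConstant : ℂ))).sub
    h2).sub (h3.clog (by simp [riemannZeta₁_one]))
  refine (HasDerivAt.deriv (f := logNumerator) h4).trans ?_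
  simp [riemannZeta₁_one]

lemma dslope_dslope_logNumerator {s : ℂ} (hs : s ≠ 0) :
    dslope (dslope logNumerator 0) 0 s = logNumerator s / s ^ 2 := by
  rw [dslope_of_ne _ hs, slope_def_field, dslope_of_ne _ hs, slope_def_field, dslope_same,
    deriv_logNumerator_zero, logNumerator_zero]
  field_simp
  ring

/-- The measure on `(0, ∞)` with density the positive part of `g`. -/
noncomputable def posMeasure (g : ℝ → ℝ) : Measure ℝ :=
  (volume.restrict (Ioi 0)).withDensity fun t => ENNReal.ofReal (g t)

lemma mem_integrableExpSet_posMeasure {g : ℝ → ℝ} (hg : Measurable g) {x : ℝ}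
    (h : IntegrableOn (fun t => g t * Real.exp (-x * t)) (Ioi 0)) :
    x ∈ integrableExpSet (fun t => -t) (posMeasure g) := by
  rw [posMeasure, mem_integrableExpSet_withDensity hg]
  refine h.pos_part.congr (Eventually.of_forall fun t => ?_)
  simp only
  rw [max_mul_of_nonneg _ _ (Real.exp_pos _).le, zero_mul, mul_neg, neg_mul]

/-- If `g` is eventually nonpositive, all exponential moments of its positive part exist. -/
lemma integrableExpSet_posMeasure_eq_univ {g : ℝ → ℝ} (hg : Measurable g) {x : ℝ}
    (h : IntegrableOn (fun t => g t * Real.exp (-x * t)) (Ioi 0))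
    (hev : ∀ᶠ t in atTop, g t ≤ 0) :
    integrableExpSet (fun t => -t) (posMeasure g) = univ := by
  refine eq_univ_of_forall fun y => ?_
  obtain ⟨T, hT⟩ := eventually_atTop.1 hev
  have hx := mem_integrableExpSet_posMeasure hg h
  rw [posMeasure, mem_integrableExpSet_withDensity hg] at hx ⊢
  refine (hx.const_mul (Real.exp (|x - y| * |T|))).mono' (by fun_prop) ?_
  filter_upwards [ae_restrict_mem measurableSet_Ioi] with t (ht : 0 < t)
  rw [Real.norm_of_nonneg (mul_nonneg (le_max_right _ _) (Real.exp_pos _).le)]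
  rcases le_or_gt T t with hTt | hTt
  · rw [max_eq_right (hT t hTt)]
    simp
  · rw [mul_left_comm, ← Real.exp_add]
    refine mul_le_mul_of_nonneg_left (Real.exp_le_exp.2 ?_) (le_max_right _ _)
    have h1 : (x - y) * t ≤ |x - y| * |T| :=
      mul_le_mul (le_abs_self _) (hTt.le.trans (le_abs_self T)) ht.le (abs_nonneg _)
    linarith

lemma complexMGF_posMeasure_sub {g : ℝ → ℝ} (hg : Measurable g) {x : ℝ}
    (h : IntegrableOn (fun t => g t * Real.exp (-x * t)) (Ioi 0)) :
    complexMGF (fun t => -t) (posMeasure g) x - complexMGF (fun t => -t) (posMeasure fun t => -g t) x =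
      ((∫ t in Ioi (0 : ℝ), g t * Real.exp (-x * t) : ℝ) : ℂ) := by
  have hg' : Measurable fun t => -g t := hg.neg
  have h' : IntegrableOn (fun t => -g t * Real.exp (-x * t)) (Ioi 0) := by
    exact Integrable.congr h.neg (Eventually.of_forall fun t => (neg_mul _ _).symm)
  have h1 := mem_integrableExpSet_posMeasure hg h
  have h2 := mem_integrableExpSet_posMeasure hg' h'
  have h3 : ∀ {g : ℝ → ℝ}, Measurable g → complexMGF (fun t => -t) (posMeasure g) x =
      ((∫ t in Ioi (0 : ℝ), max (g t) 0 * Real.exp (x * -t) : ℝ) : ℂ) := fun {g} hg => by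
    rw [posMeasure, complexMGF_withDensity hg, ← integral_complex_ofReal]
    push_cast
    rfl
  rw [posMeasure, mem_integrableExpSet_withDensity hg] at h1
  rw [posMeasure, mem_integrableExpSet_withDensity hg'] at h2
  rw [h3 hg, h3 hg', ← Complex.ofReal_sub, ← integral_sub h1 h2]
  congr 2
  ext t
  rw [← sub_mul, mul_neg, neg_mul]
  congr 1
  rcases le_total (g t) 0 with h | h
  · simp [h]
  · simp [h]

end Continuation

section Main
open MeasureTheory ProbabilityTheory Topology Set

lemma riemannZeta₁_ne_zero_of_eventually_nonneg (hev : ∀ᶠ t in atTop, 0 ≤ mertensGap t) {b : ℝ}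
    (hb : -(1 / 2) < b) (hb0 : b < 0) {s : ℂ} (hs : b < s.re) : riemannZeta₁ (s + 1) ≠ 0 := by
  set X : ℝ → ℝ := fun t => -t with hX
  set μ := posMeasure mertensGap with hμ
  set ν := posMeasure fun t => -mertensGap t with hν
  set U := {s : ℂ | b < s.re ∧ riemannZeta₁ (s + 1) ∈ Complex.slitPlane} with hU
  have hgm := measurable_mertensGap
  have hint : ∀ x : ℝ, 2 < x → IntegrableOn (fun t => mertensGap t * Real.exp (-x * t)) (Ioi 0) :=
    fun x hx => (laplace_mertensGap_real hx).1
  have hνuniv : integrableExpSet X ν = univ := by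
    refine integrableExpSet_posMeasure_eq_univ (x := 3) hgm.neg ?_ (hev.mono fun t ht => by
      simpa using ht)
    exact Integrable.congr (hint 3 (by norm_num)).neg
      (Eventually.of_forall fun t => (neg_mul _ _).symm)
  have hνan : ∀ z, AnalyticAt ℂ (complexMGF X ν) z := fun z =>
    analyticAt_complexMGF (by simp [hνuniv])
  have hbU : ∀ x : ℝ, b < x → (x : ℂ) ∈ U := fun x hx => by
    refine ⟨by simpa using hx, Or.inl ?_⟩
    have := riemannZeta₁_re_pos (s := x + 1) (by linarith)
    exact_mod_cast this
  have hU0 : U ∈ 𝓝 (0 : ℂ) := (isOpen_shifted_slitPlane b).mem_nhds (by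
    rw [← Complex.ofReal_zero]
    exact hbU 0 hb0)
  have hH : DifferentiableOn ℂ
      (fun z => dslope (dslope logNumerator 0) 0 z + complexMGF X ν z) U := by
    refine DifferentiableOn.add ?_ fun z _ => (hνan z).differentiableAt.differentiableWithinAt
    rw [Complex.differentiableOn_dslope hU0, Complex.differentiableOn_dslope hU0]
    exact differentiableOn_logNumerator hb hb0
  have heq : ∀ x : ℝ, 2 < x → complexMGF X μ x =
      dslope (dslope logNumerator 0) 0 x + complexMGF X ν x := fun x hx => by
    have hx0 : (x : ℂ) ≠ 0 := by exact_mod_cast (by linarith : x ≠ 0)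
    obtain ⟨w, hw, hwx⟩ := exp_laplace_mertensGap hx
    rw [dslope_dslope_logNumerator hx0, ← sub_eq_iff_eq_add, complexMGF_posMeasure_sub hgm
      (hint x hx), eq_div_iff (pow_ne_zero 2 hx0), mul_comm, hwx, logNumerator, ← hw,
      ← Complex.ofReal_exp, ← Complex.ofReal_log (Real.exp_pos w).le, Real.log_exp]
  have hμmem : ∀ x, b < x → x ∈ integrableExpSet X μ := fun x hx => by
    refine integrableExpSet_of_continuation measurable_neg ?_ (isOpen_shifted_slitPlane b) hbU hH
      (fun y hy => mem_integrableExpSet_posMeasure hgm (hint y hy)) heq hx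
    refine (withDensity_absolutelyContinuous _ _).ae_le ?_
    filter_upwards [ae_restrict_mem measurableSet_Ioi] with t (ht : 0 < t)
    exact neg_nonpos.2 ht.le
  have hμan : ∀ z ∈ {z : ℂ | b < z.re}, AnalyticAt ℂ (complexMGF X μ) z := fun z hz =>
    analyticAt_complexMGF (mem_interior.2 ⟨Ioi b, fun x hx => hμmem x hx, isOpen_Ioi, hz⟩)
  have hΦ : AnalyticOnNhd ℂ (fun z => Complex.exp
      (z * (Real.eulerMascheroniConstant + logSeries z) - corr z -
        z ^ 2 * (complexMGF X μ z - complexMGF X ν z))) {z : ℂ | b < z.re} := fun z hz => by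
    have h1 := (differentiableOn_logSeries hb hb0).analyticOnNhd (isOpen_re_gt b) z hz
    have h2 := (differentiableOn_corr hb hb0).analyticOnNhd (isOpen_re_gt b) z hz
    have h3 := hμan z hz
    have h4 := hνan z
    fun_prop
  have hQ : AnalyticOnNhd ℂ (fun z => riemannZeta₁ (z + 1)) {z : ℂ | b < z.re} :=
    (differentiable_riemannZeta₁.comp (differentiable_id.add_const 1)).differentiableOn.analyticOnNhd
      (isOpen_re_gt b)
  have h3 : (3 : ℂ) ∈ {z : ℂ | b < z.re} := by
    simp
    linarith
  have h4 := hQ.eqOn_of_preconnected_of_frequently_eq hΦ (convex_halfSpace_re_gt b).isPreconnected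
    h3 ?_ hs
  · simp only at h4
    rw [h4]
    exact Complex.exp_ne_zero _
  have h5 : Tendsto (fun y : ℝ => (y : ℂ)) (𝓝[≠] 3) (𝓝[≠] (3 : ℂ)) :=
    Complex.continuous_ofReal.continuousAt.continuousWithinAt.tendsto_nhdsWithin
      fun y hy h => hy (Complex.ofReal_injective (by simpa using h))
  refine h5.frequently (Eventually.frequently ?_)
  filter_upwards [nhdsWithin_le_nhds (Ioi_mem_nhds (by norm_num : (2 : ℝ) < 3))] with x hx
  obtain ⟨w, hw, hwx⟩ := exp_laplace_mertensGap hx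
  rw [complexMGF_posMeasure_sub hgm (hint x hx), hwx, ← hw, sub_sub_cancel]

end Main

/-- If RH is false, then `γ_r < e^{-γ}` for infinitely many `r`; in particular
`Γ = inf_r γ_r < e^{-γ}`. -/
theorem gammaR_lt_of_not_RH (hRH : ¬ RiemannHypothesis) :
    {r : ℕ | gammaR r < Real.exp (-Real.eulerMascheroniConstant)}.Infinite ∧
    (⨅ r : ℕ, gammaR r) < Real.exp (-Real.eulerMascheroniConstant) := by
  have hinf : {r : ℕ | gammaR r < Real.exp (-Real.eulerMascheroniConstant)}.Infinite := by
    intro hfin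
    obtain ⟨s, hs, hs1, hs2⟩ := exists_zero_of_not_RH hRH
    obtain ⟨b, hb1, hb2⟩ := exists_between (show -(1 / 2) < s.re - 1 by linarith)
    have hsne : s ≠ 1 := by
      rintro rfl
      simp at hs2
    refine riemannZeta₁_ne_zero_of_eventually_nonneg (eventually_mertensGap_nonneg hfin) hb1
      (by linarith) (s := s - 1) (by simpa using hb2) ?_
    rw [riemannZeta_eq_inv_sub_mul hsne] at hs
    rw [sub_add_cancel]
    exact (mul_eq_zero.1 hs).resolve_left (inv_ne_zero (sub_ne_zero.2 hsne))
  obtain ⟨r, hr⟩ := hinf.nonempty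
  exact ⟨hinf, (ciInf_le ⟨0, Set.forall_mem_range.2 gammaR_nonneg⟩ r).trans_lt hr⟩
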